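/- arXiv:2504.14844 — 2 statements merged into one kernel-verified Lean document; each statement's English description precedes it below -/
import Mathlib

section
/- Let $\Bbbk$ be an infinite field (or work over an algebraically closed field), and let $a_1,a_2,a_3 \in \mathbb{N}$. For pairs $(r_1,r_2)$ and $(r_1',r_2')$ both satisfying $r_i \leq a_i$-type admissibility conditions ($r_1 \le a_1$, $r_2 \le a_3$, $r_1+r_2 \le a_2$, and same for primed), the orbit closure $\overline{\mathbb{O}(r_1,r_2)}$ contains the orbit $\mathbb{O}(r_1',r_2')$ if and only if $r_1 \geq r_1'$ and $r_2 \geq r_2'$. In particular, any pair $(\alpha_1',\alpha_2')$ with $\alpha_2'\alpha_1' = 0$, $\mathrm{rank}\,\alpha_1' = r_1' \le r_1$, $\mathrm{rank}\,\alpha_2' = r_2' \le r_2$ is a limit of a one-parameter family $(\alpha_1(t), \alpha_2(t))$ with $\alpha_2(t)\alpha_1(t)=0$, of ranks $(r_1,r_2)$ for $t \ne 0$, specializing at $t = 0$ to $(\alpha_1',\alpha_2')$. -/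
/-!
Given a complex `f : U → V`, `g : V → W`, one raises the ranks by a linear pencil
`(f + t f', g + t g')`. The rank of `f + t f'` is `rank f + rank f'` for `t ≠ 0` as soon as the
ranges of `f` and `f'` are disjoint and their kernels span `U`. So let `f'` kill a complement of
`ker f` and map into a complement of `range f` inside `ker g`, and let `g'` kill
`range f ⊔ range f'` together with a complement of `ker g` and map into a complement of `range g`;
then all terms of `(g + t g') ∘ (f + t f')` vanish.

Conversely, rank is lower semicontinuous along a polynomial family `P`: if `L P(s) R` is an identity
matrix of size `rank P(s)`, then `det (L P R)` is a nonzero polynomial, and `rank P(t) ≥ rank P(s)`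
away from its finitely many roots.
-/

open Polynomial Module LinearMap

section Range

variable {R V W : Type*} [Ring R] [AddCommGroup V] [Module R V] [AddCommGroup W] [Module R W]

theorem range_le_range_add_of_codisjoint_ker {f g : V →ₗ[R] W} (h : Codisjoint (ker f) (ker g)) :
    range f ≤ range (f + g) := by
  rintro _ ⟨v, rfl⟩
  obtain ⟨x, y, hx, hy, rfl⟩ := Submodule.codisjoint_iff_exists_add_eq.1 h v
  exact ⟨y, by simp [mem_ker.1 hx, mem_ker.1 hy]⟩

theorem range_add_eq_sup_of_codisjoint_ker {f g : V →ₗ[R] W} (h : Codisjoint (ker f) (ker g)) :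
    range (f + g) = range f ⊔ range g :=
  le_antisymm (range_add_le f g) <| sup_le (range_le_range_add_of_codisjoint_ker h) <|
    add_comm f g ▸ range_le_range_add_of_codisjoint_ker h.symm

end Range

section DivisionRing

variable {K V W : Type*} [DivisionRing K] [AddCommGroup V] [Module K V] [AddCommGroup W]
  [Module K W]

theorem finrank_sup_of_disjoint {S T : Submodule K V} [FiniteDimensional K S]
    [FiniteDimensional K T] (h : Disjoint S T) :
    finrank K ↥(S ⊔ T) = finrank K S + finrank K T := by
  have := Submodule.finrank_sup_add_finrank_inf_eq S T
  rwa [h.eq_bot, finrank_bot, add_zero] at this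

theorem exists_comp_eq_id_of_le_finrank {k : ℕ} (hk : k ≤ finrank K V) :
    ∃ (i : (Fin k → K) →ₗ[K] V) (p : V →ₗ[K] Fin k → K), p ∘ₗ i = .id := by
  obtain ⟨v, hv⟩ := exists_linearIndependent_of_le_finrank hk
  let e := Finsupp.linearEquivFunOnFinite K K (Fin k)
  have hi : ker (Finsupp.linearCombination K v ∘ₗ e.symm.toLinearMap) = ⊥ :=
    ker_eq_bot.2 <| hv.finsuppLinearCombination_injective.comp e.symm.injective
  exact ⟨_, exists_leftInverse_of_injective _ hi⟩

theorem exists_comp_comp_eq_id_of_le_finrank_range (f : V →ₗ[K] W) {k : ℕ}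
    (hk : k ≤ finrank K (range f)) :
    ∃ (i : (Fin k → K) →ₗ[K] V) (p : W →ₗ[K] Fin k → K), p ∘ₗ f ∘ₗ i = .id := by
  obtain ⟨i, p, hpi⟩ := exists_comp_eq_id_of_le_finrank hk
  obtain ⟨s, hs⟩ := exists_rightInverse_of_surjective f.rangeRestrict f.range_rangeRestrict
  obtain ⟨q, hq⟩ := exists_extend p
  refine ⟨s ∘ₗ i, q, ?_⟩
  calc q ∘ₗ f ∘ₗ s ∘ₗ i = (q ∘ₗ (range f).subtype) ∘ₗ (f.rangeRestrict ∘ₗ s) ∘ₗ i := rfl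
    _ = .id := by rw [hq, hs, id_comp, hpi]

theorem exists_finrank_range_eq {k : ℕ} (hV : k ≤ finrank K V) (hW : k ≤ finrank K W) :
    ∃ f : V →ₗ[K] W, finrank K (range f) = k := by
  obtain ⟨i, p, hpi⟩ := exists_comp_eq_id_of_le_finrank hV
  obtain ⟨j, q, hqj⟩ := exists_comp_eq_id_of_le_finrank hW
  have hp : Function.Surjective p := surjective_of_comp_eq_id i p hpi
  have hj : Function.Injective j := injective_of_comp_eq_id j q hqj
  exact ⟨j ∘ₗ p, by
    rw [range_comp_of_range_eq_top j (range_eq_top.2 hp), finrank_range_of_inj hj, finrank_fin_fun]⟩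

theorem exists_le_ker_and_range_le_and_finrank_range_eq {S : Submodule K V} {D : Submodule K W}
    {k : ℕ} (hS : k ≤ finrank K (V ⧸ S)) (hD : k ≤ finrank K D) :
    ∃ f : V →ₗ[K] W, S ≤ ker f ∧ range f ≤ D ∧ finrank K (range f) = k := by
  obtain ⟨h, hh⟩ := exists_finrank_range_eq hS hD
  refine ⟨D.subtype ∘ₗ h ∘ₗ S.mkQ, fun x hx ↦ ?_, ?_, ?_⟩
  · simp [(Submodule.Quotient.mk_eq_zero S).2 hx]
  · exact (range_comp_le_range _ _).trans D.range_subtype.le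
  · rw [range_comp, range_comp_of_range_eq_top h S.range_mkQ,
      Submodule.finrank_map_subtype_eq, hh]

end DivisionRing

section Pencil

variable {K U V W : Type*} [Field K] [AddCommGroup U] [Module K U] [AddCommGroup V] [Module K V]
  [AddCommGroup W] [Module K W]

theorem finrank_range_add_smul [FiniteDimensional K V] {f g : V →ₗ[K] W}
    (hker : Codisjoint (ker f) (ker g)) (hrange : Disjoint (range f) (range g)) {t : K}
    (ht : t ≠ 0) :
    finrank K (range (f + t • g)) = finrank K (range f) + finrank K (range g) := by
  rw [range_add_eq_sup_of_codisjoint_ker (by rwa [ker_smul g t ht]), range_smul g t ht,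
    finrank_sup_of_disjoint hrange]

theorem add_smul_comp_add_smul_eq_zero {f f' : U →ₗ[K] V} {g g' : V →ₗ[K] W}
    (h : range f ⊔ range f' ≤ ker g) (h' : range f ⊔ range f' ≤ ker g') (t : K) :
    (g + t • g') ∘ₗ (f + t • f') = 0 := by
  rw [sup_le_iff, range_le_ker_iff, range_le_ker_iff] at h h'
  simp only [LinearMap.add_comp, comp_add, LinearMap.smul_comp, comp_smul, h, h', smul_zero,
    add_zero]

theorem exists_range_le_ker_and_finrank_range_add_smul [FiniteDimensional K U]
    [FiniteDimensional K V] {f : U →ₗ[K] V} {g : V →ₗ[K] W} (hgf : g ∘ₗ f = 0) {r : ℕ}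
    (hr : finrank K (range f) ≤ r) (hU : r ≤ finrank K U) (hg : r ≤ finrank K (ker g)) :
    ∃ f' : U →ₗ[K] V, range f' ≤ ker g ∧ finrank K ↥(range f ⊔ range f') = r ∧
      ∀ t : K, t ≠ 0 → finrank K (range (f + t • f')) = r := by
  obtain ⟨S, hS⟩ := exists_isCompl (ker f)
  obtain ⟨D, hD, hfD⟩ := IsModularLattice.exists_disjoint_and_sup_eq (range_le_ker_iff.2 hgf)
  have hkS : r - finrank K (range f) ≤ finrank K (U ⧸ S) := by
    have := Submodule.finrank_add_eq_of_isCompl hS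
    have := f.finrank_range_add_finrank_ker
    have := S.finrank_quotient_add_finrank
    omega
  have hkD : r - finrank K (range f) ≤ finrank K D := by
    have := finrank_sup_of_disjoint hD
    rw [hfD] at this
    omega
  obtain ⟨f', hSf', hf'D, hf'⟩ := exists_le_ker_and_range_le_and_finrank_range_eq hkS hkD
  have hdisj : Disjoint (range f) (range f') := hD.mono_right hf'D
  refine ⟨f', hf'D.trans (hfD ▸ le_sup_right), ?_, fun t ht ↦ ?_⟩
  · rw [finrank_sup_of_disjoint hdisj]
    omega
  · rw [finrank_range_add_smul (hS.codisjoint.mono_right hSf') hdisj ht]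
    omega

theorem exists_le_ker_and_finrank_range_add_smul [FiniteDimensional K V] [FiniteDimensional K W]
    (g : V →ₗ[K] W) {T : Submodule K V} {s : ℕ} (hs : finrank K (range g) ≤ s)
    (hW : s ≤ finrank K W) (hV : finrank K T + s ≤ finrank K V) :
    ∃ g' : V →ₗ[K] W, T ≤ ker g' ∧ ∀ t : K, t ≠ 0 → finrank K (range (g + t • g')) = s := by
  obtain ⟨X, hX⟩ := exists_isCompl (ker g)
  obtain ⟨D, hD⟩ := exists_isCompl (range g)
  have hkS : s - finrank K (range g) ≤ finrank K (V ⧸ T ⊔ X) := by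
    have := Submodule.finrank_add_eq_of_isCompl hX
    have := g.finrank_range_add_finrank_ker
    have := (T ⊔ X).finrank_quotient_add_finrank
    have := Submodule.finrank_add_le_finrank_add_finrank T X
    omega
  have hkD : s - finrank K (range g) ≤ finrank K D := by
    have := Submodule.finrank_add_eq_of_isCompl hD
    omega
  obtain ⟨g', hSg', hg'D, hg'⟩ := exists_le_ker_and_range_le_and_finrank_range_eq hkS hkD
  refine ⟨g', le_sup_left.trans hSg', fun t ht ↦ ?_⟩
  rw [finrank_range_add_smul (hX.codisjoint.mono_right (le_sup_right.trans hSg'))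
    (hD.disjoint.mono_right hg'D) ht]
  omega

theorem exists_pencil_comp_eq_zero_and_finrank_range [FiniteDimensional K U]
    [FiniteDimensional K V] [FiniteDimensional K W] {f : U →ₗ[K] V} {g : V →ₗ[K] W}
    (hgf : g ∘ₗ f = 0) {r s : ℕ} (hr : finrank K (range f) ≤ r) (hs : finrank K (range g) ≤ s)
    (hU : r ≤ finrank K U) (hW : s ≤ finrank K W) (hV : r + s ≤ finrank K V) :
    ∃ (f' : U →ₗ[K] V) (g' : V →ₗ[K] W), (∀ t : K, (g + t • g') ∘ₗ (f + t • f') = 0) ∧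
      ∀ t : K, t ≠ 0 →
        finrank K (range (f + t • f')) = r ∧ finrank K (range (g + t • g')) = s := by
  have hg : r ≤ finrank K (ker g) := by
    have := g.finrank_range_add_finrank_ker
    omega
  obtain ⟨f', hf'g, hsup, hf'⟩ := exists_range_le_ker_and_finrank_range_add_smul hgf hr hU hg
  obtain ⟨g', hg'f, hg'⟩ := exists_le_ker_and_finrank_range_add_smul g hs hW (hsup.symm ▸ hV)
  exact ⟨f', g', add_smul_comp_add_smul_eq_zero (sup_le (range_le_ker_iff.2 hgf) hf'g) hg'f,
    fun t ht ↦ ⟨hf' t ht, hg' t ht⟩⟩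

end Pencil

section PolynomialMatrix

variable {A m n ι : Type*} [CommRing A]

/-- The polynomial matrix `M + X N`, i.e. the line through `M` in direction `N` in the space of
matrices, as a polynomial family of matrices. -/
noncomputable def linearPencil (M N : Matrix m n A) : Matrix m n A[X] :=
  M.map C + (X : A[X]) • N.map C

@[simp]
theorem map_eval_linearPencil (M N : Matrix m n A) (t : A) :
    (linearPencil M N).map (eval t) = M + t • N := by
  ext i j
  simp [linearPencil, mul_comm t]

variable [Fintype m] [Fintype n] [Fintype ι] [DecidableEq ι]

theorem card_le_rank_of_det_mul_mul_ne_zero [IsDomain A] {L : Matrix ι m A} {M : Matrix m n A}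
    {R : Matrix n ι A} (h : (L * M * R).det ≠ 0) :
    Fintype.card ι ≤ M.rank :=
  calc Fintype.card ι = (L * M * R).rank := (Matrix.rank_of_det_ne_zero h).symm
    _ ≤ (L * M).rank := Matrix.rank_mul_le_left _ _
    _ ≤ M.rank := Matrix.rank_mul_le_right _ _

theorem eval_det_mul_mul (L : Matrix ι m A) (P : Matrix m n A[X]) (R : Matrix n ι A) (t : A) :
    (L.map C * P * R.map C).det.eval t = (L * P.map (eval t) * R).det := by
  rw [← coe_evalRingHom, RingHom.map_det, RingHom.mapMatrix_apply, Matrix.map_mul, Matrix.map_mul]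
  simp [Matrix.map_map, Function.comp_def]

end PolynomialMatrix

section Matrix

variable {K l m n : Type*} [Field K] [Fintype n]

theorem exists_mul_mul_eq_one_of_le_rank [Fintype m] {A : Matrix m n K} {k : ℕ} (hk : k ≤ A.rank) :
    ∃ (L : Matrix (Fin k) m K) (R : Matrix n (Fin k) K), L * A * R = 1 := by
  classical
  obtain ⟨i, p, h⟩ := exists_comp_comp_eq_id_of_le_finrank_range A.toLin' hk
  refine ⟨toMatrix' p, toMatrix' i, ?_⟩
  rw [Matrix.mul_assoc, ← toMatrix'_id, ← h, toMatrix'_comp, toMatrix'_comp, toMatrix'_toLin']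

theorem finite_setOfPred_rank_map_eval_lt [Finite m] (P : Matrix m n K[X]) (s : K) :
    {t : K | (P.map (eval t)).rank < (P.map (eval s)).rank}.Finite := by
  have := Fintype.ofFinite m
  obtain ⟨L, R, hLR⟩ := exists_mul_mul_eq_one_of_le_rank (A := P.map (eval s)) le_rfl
  have hq : (L.map C * P * R.map C).det ≠ 0 := fun h ↦ by
    simpa [h, hLR] using eval_det_mul_mul L P R s
  refine (finite_setOfPred_isRoot hq).subset fun t ht ↦ ?_
  rw [Set.mem_ofPred_eq] at ht ⊢
  contrapose! ht
  rw [IsRoot.def, eval_det_mul_mul] at ht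
  simpa only [Fintype.card_fin] using card_le_rank_of_det_mul_mul_ne_zero ht

theorem rank_map_eval_le_of_forall_ne [Finite m] [Infinite K] {P : Matrix m n K[X]} {s : K} {r : ℕ}
    (h : ∀ t : K, t ≠ s → (P.map (eval t)).rank ≤ r) : (P.map (eval s)).rank ≤ r := by
  obtain ⟨t, hrank, hts⟩ :=
    ((finite_setOfPred_rank_map_eval_lt P s).union (Set.finite_singleton s)).infinite_compl.nonempty
      |>.imp fun t ht ↦ not_or.1 ht
  exact (not_lt.1 hrank).trans (h t hts)

theorem exists_pencil_mul_eq_zero_and_rank [Fintype l] [Fintype m] {A₁ : Matrix m n K}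
    {A₂ : Matrix l m K} (hcomp : A₂ * A₁ = 0) {r₁ r₂ : ℕ} (hr₁ : A₁.rank ≤ r₁) (hr₂ : A₂.rank ≤ r₂)
    (hn : r₁ ≤ Fintype.card n) (hl : r₂ ≤ Fintype.card l) (hm : r₁ + r₂ ≤ Fintype.card m) :
    ∃ (B₁ : Matrix m n K) (B₂ : Matrix l m K), (∀ t : K, (A₂ + t • B₂) * (A₁ + t • B₁) = 0) ∧
      ∀ t : K, t ≠ 0 → (A₁ + t • B₁).rank = r₁ ∧ (A₂ + t • B₂).rank = r₂ := by
  classical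
  obtain ⟨f, g, hgf, hrank⟩ := exists_pencil_comp_eq_zero_and_finrank_range
    (f := A₁.toLin') (g := A₂.toLin') (by rw [← Matrix.toLin'_mul, hcomp, map_zero]) hr₁ hr₂
    (by rwa [finrank_fintype_fun_eq_card]) (by rwa [finrank_fintype_fun_eq_card])
    (by rwa [finrank_fintype_fun_eq_card])
  have hA₁ (t : K) : (A₁ + t • toMatrix' f).toLin' = A₁.toLin' + t • f := by simp
  have hA₂ (t : K) : (A₂ + t • toMatrix' g).toLin' = A₂.toLin' + t • g := by simp
  refine ⟨toMatrix' f, toMatrix' g, fun t ↦ Matrix.toLin'.injective ?_, fun t ht ↦ ?_⟩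
  · rw [Matrix.toLin'_mul, hA₁, hA₂, hgf, map_zero]
  · have h := hrank t ht
    rwa [← hA₁, ← hA₂] at h

end Matrix

theorem stmt3_general {K l m n : Type*} [Field K] [Infinite K] [Fintype l] [Fintype m] [Fintype n]
    {A₁ : Matrix m n K} {A₂ : Matrix l m K} (hcomp : A₂ * A₁ = 0) {r₁ r₂ : ℕ} :
    (∃ (P₁ : Matrix m n K[X]) (P₂ : Matrix l m K[X]),
        (∀ t : K, P₂.map (eval t) * P₁.map (eval t) = 0) ∧
        P₁.map (eval 0) = A₁ ∧ P₂.map (eval 0) = A₂ ∧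
        ∀ t : K, t ≠ 0 → (P₁.map (eval t)).rank = r₁ ∧ (P₂.map (eval t)).rank = r₂) ↔
      (A₁.rank ≤ r₁ ∧ A₂.rank ≤ r₂) ∧
        r₁ ≤ Fintype.card n ∧ r₂ ≤ Fintype.card l ∧ r₁ + r₂ ≤ Fintype.card m := by
  constructor
  · rintro ⟨P₁, P₂, hP, rfl, rfl, hrank⟩
    obtain ⟨h₁, h₂⟩ := hrank 1 one_ne_zero
    refine ⟨⟨rank_map_eval_le_of_forall_ne fun t ht ↦ (hrank t ht).1.le,
      rank_map_eval_le_of_forall_ne fun t ht ↦ (hrank t ht).2.le⟩,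
      h₁ ▸ Matrix.rank_le_card_width _, h₂ ▸ Matrix.rank_le_card_height _, ?_⟩
    rw [add_comm, ← h₁, ← h₂]
    exact Matrix.rank_add_rank_le_card_of_mul_eq_zero (hP 1)
  · rintro ⟨⟨hr₁, hr₂⟩, hn, hl, hm⟩
    obtain ⟨B₁, B₂, hB, hrank⟩ := exists_pencil_mul_eq_zero_and_rank hcomp hr₁ hr₂ hn hl hm
    refine ⟨linearPencil A₁ B₁, linearPencil A₂ B₂, ?_⟩
    simpa only [map_eval_linearPencil, zero_smul, add_zero, true_and] using ⟨hB, hrank⟩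

/-- One-parameter degeneration in the variety of complexes: for admissible rank pairs
`(r₁,r₂)` and `(r₁',r₂')`, a point `(A₁,A₂)` with `A₂A₁ = 0` of ranks `(r₁',r₂')` is the
specialization at `t = 0` of a polynomial family of complexes of ranks `(r₁,r₂)` for `t ≠ 0`
if and only if `r₁' ≤ r₁` and `r₂' ≤ r₂` (the orbit-closure order). -/
theorem stmt3 (𝕜 : Type*) [Field 𝕜] [Infinite 𝕜] (a₁ a₂ a₃ r₁ r₂ r₁' r₂' : ℕ)
    (hadm : r₁ ≤ a₁ ∧ r₂ ≤ a₃ ∧ r₁ + r₂ ≤ a₂)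
    (hadm' : r₁' ≤ a₁ ∧ r₂' ≤ a₃ ∧ r₁' + r₂' ≤ a₂)
    (A₁ : Matrix (Fin a₂) (Fin a₁) 𝕜) (A₂ : Matrix (Fin a₃) (Fin a₂) 𝕜)
    (hcomp : A₂ * A₁ = 0) (hr₁ : A₁.rank = r₁') (hr₂ : A₂.rank = r₂') :
    (∃ (P₁ : Matrix (Fin a₂) (Fin a₁) (Polynomial 𝕜))
        (P₂ : Matrix (Fin a₃) (Fin a₂) (Polynomial 𝕜)),
        (∀ t : 𝕜, P₂.map (Polynomial.eval t) * P₁.map (Polynomial.eval t) = 0) ∧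
        P₁.map (Polynomial.eval 0) = A₁ ∧
        P₂.map (Polynomial.eval 0) = A₂ ∧
        ∀ t : 𝕜, t ≠ 0 →
          (P₁.map (Polynomial.eval t)).rank = r₁ ∧ (P₂.map (Polynomial.eval t)).rank = r₂) ↔
    (r₁' ≤ r₁ ∧ r₂' ≤ r₂) := by
  simpa [hadm, hr₁, hr₂] using stmt3_general hcomp (r₁ := r₁) (r₂ := r₂)
end

section
/- Let $\Bbbk$ be an algebraically closed field. For a dimension vector $(\nu_1,\nu_2,\nu_3,\nu_4)$ of the $2\times 2$ commutative grid with $\nu_1 + \nu_4 \geq \nu_2 + \nu_3$, the number of irreducible components of the representation variety $E_C(\nu)$ equals the number of pairs $(r_1, r_2) \in \mathbb{N}^2$ with $r_1 + r_2 = \nu_2 + \nu_3$, $0 \leq r_1 \leq \nu_1$, $0 \leq r_2 \leq \nu_4$; that is, it equals $\min\{\nu_1, \nu_2+\nu_3\} - \max\{0, \nu_2+\nu_3-\nu_4\} + 1$. -/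
/-- The ambient affine space of quadruples of matrices for the `2 × 2` grid. -/
abbrev GridAmb (𝕜 : Type) [Field 𝕜] (ν₁ ν₂ ν₃ ν₄ : ℕ) : Type :=
  Matrix (Fin ν₂) (Fin ν₁) 𝕜 × Matrix (Fin ν₃) (Fin ν₁) 𝕜 ×
    Matrix (Fin ν₄) (Fin ν₂) 𝕜 × Matrix (Fin ν₄) (Fin ν₃) 𝕜

/-- The coordinate functions on the ambient affine space. -/
def gridCoords (𝕜 : Type) [Field 𝕜] (ν₁ ν₂ ν₃ ν₄ : ℕ) :
    Set (GridAmb 𝕜 ν₁ ν₂ ν₃ ν₄ → 𝕜) :=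
  {φ | (∃ i j, φ = fun x => x.1 i j) ∨ (∃ i j, φ = fun x => x.2.1 i j) ∨
    (∃ i j, φ = fun x => x.2.2.1 i j) ∨ (∃ i j, φ = fun x => x.2.2.2 i j)}

/-- The Zariski topology on the ambient affine space: generated by the nonvanishing loci of
polynomial functions (elements of the `𝕜`-subalgebra generated by the coordinates). -/
def gridZariski (𝕜 : Type) [Field 𝕜] (ν₁ ν₂ ν₃ ν₄ : ℕ) :
    TopologicalSpace (GridAmb 𝕜 ν₁ ν₂ ν₃ ν₄) :=
  TopologicalSpace.generateFrom
    {U | ∃ p ∈ Algebra.adjoin 𝕜 (gridCoords 𝕜 ν₁ ν₂ ν₃ ν₄), U = {x | p x ≠ 0}}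

/-!
Stacking the two maps out of vertex 1 and the two maps into vertex 4 identifies `E_C(ν)` with the
variety of complexes `{(M, N) | N M = 0}`. For a pair `r` of admissible ranks, let `R_r` be the
closed subset given by `rank M ≤ r₁` and `rank N ≤ r₂`. These finitely many sets cover the variety,
and `R_r ⊆ R_s` if and only if `r ≤ s`.

Each `R_r` is irreducible. Indeed, fix an idempotent `P` of rank `r₁`. Given a complex `(M, N)` in
`R_r`, there is an invertible `g` such that the image of `g P` contains the image of `M` and is
contained in the kernel of `N`; hence `M = g P X` and `N = Y B (1 - P) adj g`, where `Y B` factors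
through dimension `r₂`. So `R_r` is the image of an affine space under a polynomial map.

Consequently the irreducible components are the `R_r` with `r` maximal. When
`ν₂ + ν₃ ≤ ν₁ + ν₄`, these are the `r` with `r₁ + r₂ = ν₂ + ν₃`.
-/

open Polynomial
open scoped Matrix Topology

section Topology

variable {X Y ι : Type*} [TopologicalSpace X] [TopologicalSpace Y]

theorem exists_subset_of_isIrreducible_of_finite_cover {I : Set ι} (hI : I.Finite) {S : ι → Set X}
    (hclosed : ∀ i ∈ I, IsClosed (S i)) (hcover : ∀ x, ∃ i ∈ I, x ∈ S i) {T : Set X}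
    (hT : IsIrreducible T) : ∃ i ∈ I, T ⊆ S i := by
  classical
  obtain ⟨Z, hZ, hTZ⟩ := isIrreducible_iff_sUnion_isClosed.1 hT (hI.toFinset.image S)
    (by simpa using hclosed) fun x _ => by simpa using hcover x
  obtain ⟨i, hi, rfl⟩ := Finset.mem_image.1 hZ
  exact ⟨i, hI.mem_toFinset.1 hi, hTZ⟩

theorem irreducibleComponents_eq_image_maximal [Preorder ι] {I : Set ι} (hI : I.Finite)
    {S : ι → Set X} (hclosed : ∀ i ∈ I, IsClosed (S i)) (hirr : ∀ i ∈ I, IsIrreducible (S i))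
    (hcover : ∀ x, ∃ i ∈ I, x ∈ S i) (hle : ∀ i ∈ I, ∀ j ∈ I, S i ⊆ S j ↔ i ≤ j) :
    irreducibleComponents X = S '' {i | Maximal (· ∈ I) i} := by
  have hsub {T : Set X} (hT : IsIrreducible T) : ∃ i ∈ I, T ⊆ S i :=
    exists_subset_of_isIrreducible_of_finite_cover hI hclosed hcover hT
  ext T
  constructor
  · intro hT
    obtain ⟨i, hi, hTi⟩ := hsub hT.1
    obtain rfl : S i = T := (hT.2 (hirr i hi) hTi).antisymm hTi
    refine ⟨i, ⟨hi, fun j hj hij => ?_⟩, rfl⟩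
    exact (hle j hj i hi).1 (hT.2 (hirr j hj) ((hle i hi j hj).2 hij))
  · rintro ⟨i, hi, rfl⟩
    refine ⟨hirr i hi.1, fun T hT hiT => ?_⟩
    obtain ⟨j, hj, hTj⟩ := hsub hT
    have hij : i ≤ j := (hle i hi.1 j hj).1 (hiT.trans hTj)
    exact hTj.trans ((hle j hj i hi.1).2 (hi.2 hj hij))

theorem ncard_irreducibleComponents_eq_of_homeomorph (e : X ≃ₜ Y) :
    (irreducibleComponents X).ncard = (irreducibleComponents Y).ncard :=
  (Nat.card_congr (irreducibleComponentsEquivOfIsPreirreducibleFiber e e.continuous e.isOpenMap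
    (fun _ => (Set.subsingleton_singleton.preimage e.injective).isPreirreducible)
    e.surjective).toEquiv).symm

end Topology

section Entries

variable {𝕜 T : Type*} [Field 𝕜] {S : Subalgebra 𝕜 (T → 𝕜)} {l m n : Type*}

/-- A family of matrices whose entries, as functions of the parameter, lie in the algebra `S`
of functions. -/
def HasEntriesIn (S : Subalgebra 𝕜 (T → 𝕜)) (F : T → Matrix m n 𝕜) : Prop :=
  ∀ i j, (fun x => F x i j) ∈ S

theorem hasEntriesIn_const (A : Matrix m n 𝕜) : HasEntriesIn S fun _ => A :=
  fun i j => S.algebraMap_mem (A i j)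

namespace HasEntriesIn

theorem mul [Fintype m] {F : T → Matrix l m 𝕜} {G : T → Matrix m n 𝕜} (hF : HasEntriesIn S F)
    (hG : HasEntriesIn S G) : HasEntriesIn S fun x => F x * G x := fun i j => by
  have h := sum_mem fun k (_ : k ∈ Finset.univ) => mul_mem (hF i k) (hG k j)
  convert h using 1
  ext x
  simp [Matrix.mul_apply]

theorem det [Fintype n] [DecidableEq n] {F : T → Matrix n n 𝕜} (hF : HasEntriesIn S F) :
    (fun x => (F x).det) ∈ S := by
  have h := sum_mem fun (σ : Equiv.Perm n) (_ : σ ∈ Finset.univ) =>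
    zsmul_mem (prod_mem fun i (_ : i ∈ Finset.univ) => hF (σ i) i) (Equiv.Perm.sign σ : ℤ)
  convert h using 1
  ext x
  simp [Matrix.det_apply, Units.smul_def]

theorem adjugate [Fintype n] [DecidableEq n] {F : T → Matrix n n 𝕜} (hF : HasEntriesIn S F) :
    HasEntriesIn S fun x => (F x).adjugate := fun i j => by
  simp only [Matrix.adjugate_apply]
  refine det fun k l => ?_
  obtain rfl | hk := eq_or_ne k j
  · simp only [Matrix.updateRow_self]
    exact S.algebraMap_mem ((Pi.single i 1 : n → 𝕜) l)
  · simpa only [Matrix.updateRow_ne hk] using hF k l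

theorem dual_comp_mem [Finite m] [Finite n] {F : T → Matrix m n 𝕜} (hF : HasEntriesIn S F)
    (φ : Module.Dual 𝕜 (Matrix m n 𝕜)) : (fun x => φ (F x)) ∈ S := by
  classical
  cases nonempty_fintype m
  cases nonempty_fintype n
  have h := sum_mem fun i (_ : i ∈ Finset.univ) => sum_mem fun j (_ : j ∈ Finset.univ) =>
    S.smul_mem (hF i j) (φ (Matrix.single i j 1))
  convert h using 1
  ext x
  conv_lhs => rw [Matrix.matrix_eq_sum_single (F x)]
  simp only [map_sum, Finset.sum_apply, Pi.smul_apply, smul_eq_mul]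
  refine Finset.sum_congr rfl fun i _ => Finset.sum_congr rfl fun j _ => ?_
  rw [mul_comm, ← smul_eq_mul, ← map_smul, Matrix.smul_single, smul_eq_mul, mul_one]

end HasEntriesIn

theorem dual_comp_prodMk_mem {M N : Type*} [AddCommGroup M] [Module 𝕜 M] [AddCommGroup N]
    [Module 𝕜 N] {F : T → M} {G : T → N} (hF : ∀ φ : Module.Dual 𝕜 M, (fun x => φ (F x)) ∈ S)
    (hG : ∀ φ : Module.Dual 𝕜 N, (fun x => φ (G x)) ∈ S) (φ : Module.Dual 𝕜 (M × N)) :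
    (fun x => φ (F x, G x)) ∈ S := by
  convert add_mem (hF (φ ∘ₗ LinearMap.inl 𝕜 M N)) (hG (φ ∘ₗ LinearMap.inr 𝕜 M N)) using 1
  ext x
  simp [← map_add]

end Entries

section Zariski

variable (𝕜 : Type*) [Field 𝕜] (V : Type*) [AddCommGroup V] [Module 𝕜 V]

/-- The algebra of polynomial functions on a vector space, generated by the linear functionals. -/
def regularFunctions : Subalgebra 𝕜 (V → 𝕜) :=
  Algebra.adjoin 𝕜 (Set.range fun φ : Module.Dual 𝕜 V => (φ : V → 𝕜))

/-- The Zariski topology of a vector space, generated by the nonvanishing loci of polynomial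
functions. -/
abbrev zariskiTopology : TopologicalSpace V :=
  TopologicalSpace.generateFrom {U | ∃ p ∈ regularFunctions 𝕜 V, U = {x | p x ≠ 0}}

variable {𝕜 V} {W m n : Type*} [AddCommGroup W] [Module 𝕜 W]

theorem dual_mem_regularFunctions (φ : Module.Dual 𝕜 V) : (φ : V → 𝕜) ∈ regularFunctions 𝕜 V :=
  Algebra.subset_adjoin ⟨φ, rfl⟩

theorem hasEntriesIn_linearMap (L : V →ₗ[𝕜] Matrix m n 𝕜) :
    HasEntriesIn (regularFunctions 𝕜 V) L := fun i j =>
  dual_mem_regularFunctions (Matrix.entryLinearMap 𝕜 𝕜 i j ∘ₗ L)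

theorem exists_polynomial_eval_lineMap {p : V → 𝕜} (hp : p ∈ regularFunctions 𝕜 V) (v w : V) :
    ∃ P : 𝕜[X], ∀ t, p (AffineMap.lineMap v w t) = P.eval t := by
  induction hp using Algebra.adjoin_induction with
  | mem p hp =>
    obtain ⟨φ, rfl⟩ := hp
    exact ⟨C (φ (w - v)) * X + C (φ v), fun t => by
      simp [AffineMap.lineMap_apply_module', mul_comm]⟩
  | algebraMap c => exact ⟨C c, fun t => by simp⟩
  | add p q _ _ hp hq =>
    obtain ⟨P, hP⟩ := hp
    obtain ⟨Q, hQ⟩ := hq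
    exact ⟨P + Q, fun t => by simp [hP, hQ]⟩
  | mul p q _ _ hp hq =>
    obtain ⟨P, hP⟩ := hp
    obtain ⟨Q, hQ⟩ := hq
    exact ⟨P * Q, fun t => by simp [hP, hQ]⟩

/- On the line through a point where `p ≠ 0` and a point where `q ≠ 0`, both restrict to nonzero
polynomials in one variable. -/
theorem exists_mul_ne_zero_of_mem_regularFunctions [Infinite 𝕜] {p q : V → 𝕜}
    (hp : p ∈ regularFunctions 𝕜 V) (hq : q ∈ regularFunctions 𝕜 V) {v w : V} (hv : p v ≠ 0)
    (hw : q w ≠ 0) : ∃ x, p x * q x ≠ 0 := by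
  obtain ⟨P, hP⟩ := exists_polynomial_eval_lineMap hp v w
  obtain ⟨Q, hQ⟩ := exists_polynomial_eval_lineMap hq v w
  have hP0 : P ≠ 0 := by
    rintro rfl
    exact hv (by simpa using hP 0)
  have hQ0 : Q ≠ 0 := by
    rintro rfl
    exact hw (by simpa using hQ 1)
  by_contra! h
  refine mul_ne_zero hP0 hQ0 (Polynomial.funext fun t => ?_)
  rw [eval_mul, ← hP, ← hQ, h, eval_zero]

variable (𝕜 V) in
theorem isTopologicalBasis_zariskiTopology :
    @TopologicalSpace.IsTopologicalBasis V (zariskiTopology 𝕜 V)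
      {U | ∃ p ∈ regularFunctions 𝕜 V, U = {x | p x ≠ 0}} := by
  let := zariskiTopology 𝕜 V
  refine TopologicalSpace.isTopologicalBasis_of_subbasis_of_finiteInter rfl ⟨?_, ?_⟩
  · exact ⟨1, one_mem _, by simp⟩
  · rintro _ ⟨p, hp, rfl⟩ _ ⟨q, hq, rfl⟩
    exact ⟨p * q, mul_mem hp hq, by ext; simp⟩

variable (𝕜 V) in
theorem irreducibleSpace_zariskiTopology [Infinite 𝕜] :
    @IrreducibleSpace V (zariskiTopology 𝕜 V) := by
  let := zariskiTopology 𝕜 V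
  have hbasis := isTopologicalBasis_zariskiTopology 𝕜 V
  refine @IrreducibleSpace.mk V _ (.of_forall_nonempty_inter fun A B hA hB hA0 hB0 => ?_) ⟨0⟩
  obtain ⟨v, hvA⟩ := hA0
  obtain ⟨w, hwB⟩ := hB0
  obtain ⟨_, ⟨p, hp, rfl⟩, hpv, hpA⟩ := hbasis.exists_subset_of_mem_open hvA hA
  obtain ⟨_, ⟨q, hq, rfl⟩, hqw, hqB⟩ := hbasis.exists_subset_of_mem_open hwB hB
  obtain ⟨x, hx⟩ := exists_mul_ne_zero_of_mem_regularFunctions hp hq hpv hqw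
  exact ⟨x, hpA (left_ne_zero_of_mul hx), hqB (right_ne_zero_of_mul hx)⟩

theorem isClosed_zariskiTopology_setOf_eq_zero {p : V → 𝕜} (hp : p ∈ regularFunctions 𝕜 V) :
    IsClosed[zariskiTopology 𝕜 V] {x | p x = 0} := by
  let := zariskiTopology 𝕜 V
  exact ⟨TopologicalSpace.isOpen_generateFrom_of_mem ⟨p, hp, rfl⟩⟩

theorem continuous_zariskiTopology {Φ : V → W}
    (hΦ : ∀ φ : Module.Dual 𝕜 W, (fun v => φ (Φ v)) ∈ regularFunctions 𝕜 V) :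
    Continuous[zariskiTopology 𝕜 V, zariskiTopology 𝕜 W] Φ := by
  have hcomp : ∀ p ∈ regularFunctions 𝕜 W, (fun v => p (Φ v)) ∈ regularFunctions 𝕜 V := by
    intro p hp
    induction hp using Algebra.adjoin_induction with
    | mem p hp =>
      obtain ⟨φ, rfl⟩ := hp
      exact hΦ φ
    | algebraMap c => exact (regularFunctions 𝕜 V).algebraMap_mem c
    | add p q _ _ hp hq => exact add_mem hp hq
    | mul p q _ _ hp hq => exact mul_mem hp hq
  let := zariskiTopology 𝕜 V
  refine continuous_generateFrom_iff.2 ?_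
  rintro _ ⟨p, hp, rfl⟩
  exact TopologicalSpace.isOpen_generateFrom_of_mem ⟨_, hcomp p hp, rfl⟩

theorem continuous_zariskiTopology_linearMap (L : V →ₗ[𝕜] W) :
    Continuous[zariskiTopology 𝕜 V, zariskiTopology 𝕜 W] L :=
  continuous_zariskiTopology fun φ => dual_mem_regularFunctions (φ ∘ₗ L)

end Zariski

section Rank

variable {𝕜 : Type*} [Field 𝕜] {ι κ m n p q : Type*}

theorem exists_submodule_between_finrank_eq {V : Type*} [AddCommGroup V] [Module 𝕜 V]
    [FiniteDimensional 𝕜 V] {A B : Submodule 𝕜 V} (hAB : A ≤ B) {k : ℕ}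
    (hAk : Module.finrank 𝕜 A ≤ k) (hkB : k ≤ Module.finrank 𝕜 B) :
    ∃ U : Submodule 𝕜 V, A ≤ U ∧ U ≤ B ∧ Module.finrank 𝕜 U = k := by
  induction k, hAk using Nat.le_induction with
  | base => exact ⟨A, le_rfl, hAB, rfl⟩
  | succ k _ ih =>
    obtain ⟨U, hAU, hUB, hU⟩ := ih (by lia)
    have hlt : U < B := lt_of_le_of_ne hUB (by rintro rfl; lia)
    obtain ⟨v, hvB, hvU⟩ := SetLike.exists_of_lt hlt
    have hv : v ≠ 0 := fun h => hvU (h ▸ U.zero_mem)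
    have hdim := Submodule.finrank_sup_add_finrank_inf_eq U (𝕜 ∙ v)
    rw [((Submodule.disjoint_span_singleton' hv).2 hvU).eq_bot, finrank_bot,
      finrank_span_singleton hv] at hdim
    exact ⟨U ⊔ 𝕜 ∙ v, hAU.trans le_sup_left, sup_le hUB (by simpa using hvB), by lia⟩

theorem exists_eq_mul_of_rank_le_card [Finite m] [Fintype n] [Fintype κ] {A : Matrix m n 𝕜}
    (hA : A.rank ≤ Fintype.card κ) :
    ∃ (Y : Matrix m κ 𝕜) (B : Matrix κ n 𝕜), A = Y * B := by
  classical
  cases nonempty_fintype m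
  obtain ⟨f, hf⟩ : ∃ f : LinearMap.range A.mulVecLin →ₗ[𝕜] κ → 𝕜, Function.Injective f :=
    finrank_le_iff_exists_linearMap.1 (by simpa [Matrix.rank] using hA)
  obtain ⟨g, hgf⟩ := f.exists_leftInverse_of_injective (LinearMap.ker_eq_bot.2 hf)
  have hfac : (Submodule.subtype _ ∘ₗ g) ∘ₗ (f ∘ₗ A.mulVecLin.rangeRestrict) = A.mulVecLin :=
    LinearMap.ext fun v =>
      congrArg Subtype.val (LinearMap.congr_fun hgf (A.mulVecLin.rangeRestrict v))
  refine ⟨LinearMap.toMatrix' (Submodule.subtype _ ∘ₗ g),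
    LinearMap.toMatrix' (f ∘ₗ A.mulVecLin.rangeRestrict), ?_⟩
  rw [← LinearMap.toMatrix'_comp, hfac]
  exact (LinearMap.toMatrix'_toLin' A).symm

theorem card_le_rank_of_mul_mul_eq_one [Fintype m] [Fintype n] [Fintype κ] [DecidableEq κ]
    {A : Matrix m n 𝕜} {X : Matrix κ m 𝕜} {Y : Matrix n κ 𝕜} (h : X * A * Y = 1) :
    Fintype.card κ ≤ A.rank := by
  calc Fintype.card κ = (X * A * Y).rank := by rw [h, Matrix.rank_one]
    _ ≤ (X * A).rank := Matrix.rank_mul_le_left _ _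
    _ ≤ A.rank := Matrix.rank_mul_le_right _ _

theorem exists_mul_mul_eq_one_of_card_le_rank [Fintype m] [Fintype n] [Fintype κ] [DecidableEq κ]
    {A : Matrix m n 𝕜} (hA : Fintype.card κ ≤ A.rank) :
    ∃ (X : Matrix κ m 𝕜) (Y : Matrix n κ 𝕜), X * A * Y = 1 := by
  classical
  obtain ⟨f, hf⟩ : ∃ f : (κ → 𝕜) →ₗ[𝕜] LinearMap.range A.mulVecLin, Function.Injective f :=
    finrank_le_iff_exists_linearMap.1 (by simpa [Matrix.rank] using hA)
  obtain ⟨s, hs⟩ := A.mulVecLin.rangeRestrict.exists_rightInverse_of_surjective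
    A.mulVecLin.range_rangeRestrict
  obtain ⟨g, hg⟩ := (Submodule.subtype _ ∘ₗ f).exists_leftInverse_of_injective
    (LinearMap.ker_eq_bot.2 (Subtype.val_injective.comp hf))
  have hAs : A.mulVecLin ∘ₗ s ∘ₗ f = Submodule.subtype _ ∘ₗ f :=
    LinearMap.ext fun v => congrArg Subtype.val (LinearMap.congr_fun hs (f v))
  have hAmat : LinearMap.toMatrix' A.mulVecLin = A := LinearMap.toMatrix'_toLin' A
  refine ⟨LinearMap.toMatrix' g, LinearMap.toMatrix' (s ∘ₗ f), ?_⟩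
  calc LinearMap.toMatrix' g * A * LinearMap.toMatrix' (s ∘ₗ f)
      = LinearMap.toMatrix' (g ∘ₗ A.mulVecLin ∘ₗ s ∘ₗ f) := by
        rw [LinearMap.toMatrix'_comp, LinearMap.toMatrix'_comp, hAmat, Matrix.mul_assoc]
    _ = 1 := by rw [hAs, hg, LinearMap.toMatrix'_id]

theorem exists_mul_eq_one_of_card_le_card (𝕜 : Type*) [Field 𝕜] [Fintype n] [Fintype κ]
    [DecidableEq κ] (h : Fintype.card κ ≤ Fintype.card n) :
    ∃ (X : Matrix κ n 𝕜) (Y : Matrix n κ 𝕜), X * Y = 1 := by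
  classical
  simpa using exists_mul_mul_eq_one_of_card_le_rank (A := (1 : Matrix n n 𝕜)) (κ := κ) (by simpa)

theorem rank_le_iff_forall_det_eq_zero [Fintype m] [Fintype n] {A : Matrix m n 𝕜} {r : ℕ} :
    A.rank ≤ r ↔
      ∀ (X : Matrix (Fin (r + 1)) m 𝕜) (Y : Matrix n (Fin (r + 1)) 𝕜), (X * A * Y).det = 0 := by
  constructor
  · intro hA X Y
    by_contra hdet
    have hinv : ((X * A * Y)⁻¹ * X) * A * Y = 1 := by
      simpa only [Matrix.mul_assoc] using Matrix.nonsing_inv_mul _ (isUnit_iff_ne_zero.2 hdet)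
    have hcard := card_le_rank_of_mul_mul_eq_one hinv
    rw [Fintype.card_fin] at hcard
    lia
  · intro h
    by_contra! hA
    obtain ⟨X, Y, hXY⟩ := exists_mul_mul_eq_one_of_card_le_rank (κ := Fin (r + 1)) (A := A)
      (by simpa using hA)
    exact one_ne_zero (by rw [← h X Y, hXY, Matrix.det_one])

theorem exists_isIdempotentElem_rank_eq (𝕜 : Type*) [Field 𝕜] [Fintype n] {r : ℕ}
    (hr : r ≤ Fintype.card n) : ∃ P : Matrix n n 𝕜, IsIdempotentElem P ∧ P.rank = r := by
  obtain ⟨X, Y, hXY⟩ := exists_mul_eq_one_of_card_le_card 𝕜 (n := n) (κ := Fin r) (by simpa)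
  have hP : IsIdempotentElem (Y * X) := by
    rw [IsIdempotentElem, Matrix.mul_assoc, ← Matrix.mul_assoc X, hXY, Matrix.one_mul]
  have hone : X * (Y * X) * Y = 1 := by
    rw [← Matrix.mul_assoc, hXY, Matrix.one_mul, hXY]
  refine ⟨Y * X, hP, le_antisymm ?_ (by simpa using card_le_rank_of_mul_mul_eq_one hone)⟩
  simpa using (Matrix.rank_mul_le_left Y X).trans Y.rank_le_card_width

theorem exists_linearEquiv_map_eq {V : Type*} [AddCommGroup V] [Module 𝕜 V]
    [FiniteDimensional 𝕜 V] {A B : Submodule 𝕜 V}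
    (h : Module.finrank 𝕜 A = Module.finrank 𝕜 B) :
    ∃ E : V ≃ₗ[𝕜] V, A.map E.toLinearMap = B := by
  obtain ⟨E, hE⟩ := Submodule.exists_linearEquiv_restrict_eq (LinearEquiv.ofFinrankEq A B h)
  refine ⟨E, Submodule.eq_of_le_of_finrank_eq ?_ (by rw [LinearEquiv.finrank_map_eq, h])⟩
  rintro _ ⟨v, hv, rfl⟩
  exact hE ⟨v, hv⟩ ▸ Subtype.property _

/- The columns of `g * P` span a subspace between the image of `M` and the kernel of `N`. -/
theorem exists_adapted_basis [Fintype ι] [DecidableEq ι] [Fintype p] [Finite q]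
    {P : Matrix ι ι 𝕜} (hP : IsIdempotentElem P) {M : Matrix ι p 𝕜} {N : Matrix q ι 𝕜}
    (hNM : N * M = 0) (hM : M.rank ≤ P.rank) (hN : N.rank + P.rank ≤ Fintype.card ι) :
    ∃ g h : Matrix ι ι 𝕜, g * h = 1 ∧ P * (h * M) = h * M ∧ N * (g * P) = 0 := by
  have hle : LinearMap.range M.mulVecLin ≤ LinearMap.ker N.mulVecLin := by
    rintro _ ⟨v, rfl⟩
    simp [hNM]
  have hker : P.rank ≤ Module.finrank 𝕜 (LinearMap.ker N.mulVecLin) := by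
    have hdim := N.mulVecLin.finrank_range_add_finrank_ker
    rw [Module.finrank_fintype_fun_eq_card, ← Matrix.rank] at hdim
    lia
  obtain ⟨U, hMU, hUN, hU⟩ := exists_submodule_between_finrank_eq hle hM hker
  obtain ⟨E, hE⟩ := exists_linearEquiv_map_eq (A := LinearMap.range P.mulVecLin) hU.symm
  refine ⟨LinearMap.toMatrix' E.toLinearMap, LinearMap.toMatrix' E.symm.toLinearMap, ?_, ?_, ?_⟩
  · simp [← LinearMap.toMatrix'_comp]
  · refine Matrix.mulVec_injective (funext fun v => ?_)
    obtain ⟨_, ⟨w, rfl⟩, hw⟩ : M *ᵥ v ∈ (LinearMap.range P.mulVecLin).map E.toLinearMap :=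
      hE ▸ hMU ⟨v, rfl⟩
    have hv : E.symm (M *ᵥ v) = P *ᵥ w := by simp [← hw]
    simp only [← Matrix.mulVec_mulVec, LinearMap.toMatrix'_mulVec, LinearEquiv.coe_coe, hv]
    rw [Matrix.mulVec_mulVec, hP.eq]
  · refine Matrix.mulVec_injective (funext fun v => ?_)
    have hv : E (P *ᵥ v) ∈ U := hE ▸ Submodule.mem_map_of_mem ⟨v, rfl⟩
    simpa [← Matrix.mulVec_mulVec] using hUN hv

end Rank

section ZariskiMatrix

variable {𝕜 V : Type*} [Field 𝕜] [AddCommGroup V] [Module 𝕜 V] {k l m n : Type*}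

theorem isClosed_zariskiTopology_setOf_rank_le [Finite m] [Fintype n] {F : V → Matrix m n 𝕜}
    (hF : HasEntriesIn (regularFunctions 𝕜 V) F) (r : ℕ) :
    IsClosed[zariskiTopology 𝕜 V] {v | (F v).rank ≤ r} := by
  cases nonempty_fintype m
  simp only [rank_le_iff_forall_det_eq_zero, Set.ofPred_forall]
  let := zariskiTopology 𝕜 V
  exact isClosed_iInter fun X => isClosed_iInter fun Y => isClosed_zariskiTopology_setOf_eq_zero
    (((hasEntriesIn_const X).mul hF).mul (hasEntriesIn_const Y)).det

theorem continuous_zariskiTopology_matrix_prodMk [Finite k] [Finite l] [Finite m] [Finite n]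
    {F : V → Matrix k l 𝕜} {G : V → Matrix m n 𝕜} (hF : HasEntriesIn (regularFunctions 𝕜 V) F)
    (hG : HasEntriesIn (regularFunctions 𝕜 V) G) :
    Continuous[zariskiTopology 𝕜 V, zariskiTopology 𝕜 _] fun v => (F v, G v) :=
  continuous_zariskiTopology (dual_comp_prodMk_mem hF.dual_comp_mem hG.dual_comp_mem)

end ZariskiMatrix

section VarietyOfComplexes

variable (𝕜 p ι q : Type*) [Field 𝕜] [Fintype ι]

/-- The variety of complexes `𝕜^p → 𝕜^ι → 𝕜^q`, i.e. pairs of composable matrices with product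
zero. -/
def VarietyOfComplexes : Type _ :=
  {x : Matrix ι p 𝕜 × Matrix q ι 𝕜 // x.2 * x.1 = 0}

instance : TopologicalSpace (VarietyOfComplexes 𝕜 p ι q) :=
  (zariskiTopology 𝕜 (Matrix ι p 𝕜 × Matrix q ι 𝕜)).induced Subtype.val

/-- A rank locus of the variety of complexes. The ranks are bounded rather than prescribed, so that
the locus is closed. -/
def rankLocus [Fintype p] (r : ℕ × ℕ) : Set (VarietyOfComplexes 𝕜 p ι q) :=
  {x | x.1.1.rank ≤ r.1 ∧ x.1.2.rank ≤ r.2}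

/-- The pairs of ranks of the two differentials of complexes with terms of dimensions `a`, `n`
and `b`. -/
def admissibleRanks (a n b : ℕ) : Set (ℕ × ℕ) :=
  {r | r.1 ≤ a ∧ r.2 ≤ b ∧ r.1 + r.2 ≤ n}

theorem finite_admissibleRanks (a n b : ℕ) : (admissibleRanks a n b).Finite :=
  (Set.finite_Iic (a, b)).subset fun _ hr => ⟨hr.1, hr.2.1⟩

variable {𝕜 p ι q}

theorem isClosed_rankLocus [Fintype p] [Finite q] (r : ℕ × ℕ) :
    IsClosed (rankLocus 𝕜 p ι q r) := by
  let := zariskiTopology 𝕜 (Matrix ι p 𝕜 × Matrix q ι 𝕜)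
  have h₁ := isClosed_zariskiTopology_setOf_rank_le
    (hasEntriesIn_linearMap (LinearMap.fst 𝕜 (Matrix ι p 𝕜) (Matrix q ι 𝕜))) r.1
  have h₂ := isClosed_zariskiTopology_setOf_rank_le
    (hasEntriesIn_linearMap (LinearMap.snd 𝕜 (Matrix ι p 𝕜) (Matrix q ι 𝕜))) r.2
  exact (h₁.inter h₂).preimage continuous_induced_dom

theorem exists_mem_rankLocus [Fintype p] [Fintype q] (x : VarietyOfComplexes 𝕜 p ι q) :
    ∃ r ∈ admissibleRanks (Fintype.card p) (Fintype.card ι) (Fintype.card q),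
      x ∈ rankLocus 𝕜 p ι q r := by
  refine ⟨(x.1.1.rank, x.1.2.rank),
    ⟨x.1.1.rank_le_card_width, x.1.2.rank_le_card_height, ?_⟩, le_rfl, le_rfl⟩
  rw [add_comm]
  exact Matrix.rank_add_rank_le_card_of_mul_eq_zero x.2

theorem exists_rank_eq_of_mem_admissibleRanks [Fintype p] [Fintype q] {r : ℕ × ℕ}
    (hr : r ∈ admissibleRanks (Fintype.card p) (Fintype.card ι) (Fintype.card q)) :
    ∃ x : VarietyOfComplexes 𝕜 p ι q, x.1.1.rank = r.1 ∧ x.1.2.rank = r.2 := by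
  obtain ⟨a, b⟩ := r
  obtain ⟨ha, hb, hab⟩ := hr
  obtain ⟨X, Y, hXY⟩ :=
    exists_mul_eq_one_of_card_le_card 𝕜 (n := ι) (κ := Fin a ⊕ Fin b) (by simpa using hab)
  obtain ⟨Xp, Yp, hp⟩ := exists_mul_eq_one_of_card_le_card 𝕜 (n := p) (κ := Fin a) (by simpa)
  obtain ⟨Xq, Yq, hq⟩ := exists_mul_eq_one_of_card_le_card 𝕜 (n := q) (κ := Fin b) (by simpa)
  rw [← Matrix.fromRows_toRows X, ← Matrix.fromCols_toCols Y, Matrix.fromRows_mul_fromCols,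
    ← Matrix.fromBlocks_one, Matrix.fromBlocks_inj] at hXY
  obtain ⟨h₁₁, -, h₂₁, h₂₂⟩ := hXY
  have hNM : Yq * X.toRows₂ * (Y.toCols₁ * Xp) = 0 := by
    rw [Matrix.mul_assoc, ← Matrix.mul_assoc X.toRows₂, h₂₁, Matrix.zero_mul, Matrix.mul_zero]
  have hM : X.toRows₁ * (Y.toCols₁ * Xp) * Yp = 1 := by
    rw [← Matrix.mul_assoc, h₁₁, Matrix.one_mul, hp]
  have hN : Xq * (Yq * X.toRows₂) * Y.toCols₂ = 1 := by
    rw [← Matrix.mul_assoc, hq, Matrix.one_mul, h₂₂]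
  refine ⟨⟨(Y.toCols₁ * Xp, Yq * X.toRows₂), hNM⟩, le_antisymm ?_ ?_, le_antisymm ?_ ?_⟩
  · simpa using (Matrix.rank_mul_le_left _ _).trans Y.toCols₁.rank_le_card_width
  · simpa using card_le_rank_of_mul_mul_eq_one hM
  · simpa using (Matrix.rank_mul_le_left _ _).trans Yq.rank_le_card_width
  · simpa using card_le_rank_of_mul_mul_eq_one hN

theorem rankLocus_subset_rankLocus_iff [Fintype p] [Fintype q] {r s : ℕ × ℕ}
    (hr : r ∈ admissibleRanks (Fintype.card p) (Fintype.card ι) (Fintype.card q)) :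
    rankLocus 𝕜 p ι q r ⊆ rankLocus 𝕜 p ι q s ↔ r ≤ s := by
  refine ⟨fun h => ?_, fun h x hx => ⟨hx.1.trans h.1, hx.2.trans h.2⟩⟩
  obtain ⟨x, hx₁, hx₂⟩ := exists_rank_eq_of_mem_admissibleRanks (𝕜 := 𝕜) hr
  obtain ⟨hs₁, hs₂⟩ := h (show x ∈ rankLocus 𝕜 p ι q r from ⟨hx₁.le, hx₂.le⟩)
  exact ⟨hx₁ ▸ hs₁, hx₂ ▸ hs₂⟩

/-- The parametrization `(g, X, Y, B) ↦ (g P X, Y B (1 - P) adj g)` of a rank locus, for `P`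
idempotent. The adjugate replaces the inverse, so that the entries are polynomial and `g` may be
singular. -/
def adaptedComplex [DecidableEq ι] {P : Matrix ι ι 𝕜} (hP : IsIdempotentElem P) (b : ℕ)
    (v : Matrix ι ι 𝕜 × Matrix ι p 𝕜 × Matrix q (Fin b) 𝕜 × Matrix (Fin b) ι 𝕜) :
    VarietyOfComplexes 𝕜 p ι q :=
  ⟨(v.1 * P * v.2.1, v.2.2.1 * v.2.2.2 * (1 - P) * v.1.adjugate), by
    calc v.2.2.1 * v.2.2.2 * (1 - P) * v.1.adjugate * (v.1 * P * v.2.1)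
        = v.2.2.1 * v.2.2.2 * ((1 - P) * (v.1.adjugate * v.1) * P) * v.2.1 := by
          simp only [Matrix.mul_assoc]
      _ = 0 := by simp [Matrix.adjugate_mul, hP.one_sub_mul_self]⟩

theorem continuous_adaptedComplex [DecidableEq ι] [Finite p] [Finite q] {P : Matrix ι ι 𝕜}
    (hP : IsIdempotentElem P) (b : ℕ) :
    Continuous[zariskiTopology 𝕜 _, inferInstance] (adaptedComplex (p := p) (q := q) hP b) := by
  let A := Matrix ι ι 𝕜 × Matrix ι p 𝕜 × Matrix q (Fin b) 𝕜 × Matrix (Fin b) ι 𝕜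
  have hg : HasEntriesIn (regularFunctions 𝕜 A) fun v => v.1 :=
    hasEntriesIn_linearMap (V := A) (LinearMap.fst 𝕜 _ _)
  have hX : HasEntriesIn (regularFunctions 𝕜 A) fun v => v.2.1 :=
    hasEntriesIn_linearMap (V := A) (LinearMap.fst 𝕜 _ _ ∘ₗ LinearMap.snd 𝕜 _ _)
  have hY : HasEntriesIn (regularFunctions 𝕜 A) fun v => v.2.2.1 :=
    hasEntriesIn_linearMap (V := A)
      (LinearMap.fst 𝕜 _ _ ∘ₗ LinearMap.snd 𝕜 _ _ ∘ₗ LinearMap.snd 𝕜 _ _)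
  have hB : HasEntriesIn (regularFunctions 𝕜 A) fun v => v.2.2.2 :=
    hasEntriesIn_linearMap (V := A)
      (LinearMap.snd 𝕜 _ _ ∘ₗ LinearMap.snd 𝕜 _ _ ∘ₗ LinearMap.snd 𝕜 _ _)
  exact continuous_induced_rng.2 (continuous_zariskiTopology_matrix_prodMk
    ((hg.mul (hasEntriesIn_const P)).mul hX)
    (((hY.mul hB).mul (hasEntriesIn_const (1 - P))).mul hg.adjugate))

theorem adaptedComplex_mem_rankLocus [DecidableEq ι] [Fintype p] {P : Matrix ι ι 𝕜}
    (hP : IsIdempotentElem P) {b : ℕ}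
    (v : Matrix ι ι 𝕜 × Matrix ι p 𝕜 × Matrix q (Fin b) 𝕜 × Matrix (Fin b) ι 𝕜) :
    adaptedComplex hP b v ∈ rankLocus 𝕜 p ι q (P.rank, b) := by
  constructor
  · exact (Matrix.rank_mul_le_left _ _).trans (Matrix.rank_mul_le_right _ _)
  · simp only [adaptedComplex, Matrix.mul_assoc]
    simpa using (Matrix.rank_mul_le_left _ _).trans v.2.2.1.rank_le_card_width

theorem exists_adaptedComplex_eq [DecidableEq ι] [Fintype p] [Finite q] {P : Matrix ι ι 𝕜}
    (hP : IsIdempotentElem P) {b : ℕ} (hb : P.rank + b ≤ Fintype.card ι)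
    {x : VarietyOfComplexes 𝕜 p ι q} (hx : x ∈ rankLocus 𝕜 p ι q (P.rank, b)) :
    ∃ v, adaptedComplex hP b v = x := by
  obtain ⟨⟨M, N⟩, hNM⟩ := x
  obtain ⟨hM, hN⟩ : M.rank ≤ P.rank ∧ N.rank ≤ b := hx
  obtain ⟨g, h, hgh, hPM, hNP⟩ := exists_adapted_basis hP hNM hM (by lia)
  have hdet : g.det ≠ 0 := left_ne_zero_of_mul_eq_one (b := h.det) (by
    rw [← Matrix.det_mul, hgh, Matrix.det_one])
  obtain ⟨Y, B, hYB⟩ := exists_eq_mul_of_rank_le_card (κ := Fin b) (A := N * g) (by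
    simpa using (Matrix.rank_mul_le_left N g).trans hN)
  refine ⟨(g, h * M, Y, g.det⁻¹ • B), Subtype.ext (Prod.ext ?_ ?_)⟩
  · change g * P * (h * M) = M
    rw [Matrix.mul_assoc, hPM, ← Matrix.mul_assoc, hgh, Matrix.one_mul]
  · change Y * (g.det⁻¹ • B) * (1 - P) * g.adjugate = N
    have hNg : N * g * (1 - P) = N * g := by
      rw [Matrix.mul_sub, Matrix.mul_one, Matrix.mul_assoc, hNP, sub_zero]
    calc Y * (g.det⁻¹ • B) * (1 - P) * g.adjugate
        = g.det⁻¹ • (N * g * (1 - P) * g.adjugate) := by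
          rw [Matrix.mul_smul, ← hYB, Matrix.smul_mul, Matrix.smul_mul]
      _ = N := by
          rw [hNg, Matrix.mul_assoc, Matrix.mul_adjugate, Matrix.mul_smul, Matrix.mul_one,
            inv_smul_smul₀ hdet]

theorem isIrreducible_rankLocus [Infinite 𝕜] [Fintype p] [Finite q] {r : ℕ × ℕ}
    (hr : r.1 + r.2 ≤ Fintype.card ι) : IsIrreducible (rankLocus 𝕜 p ι q r) := by
  classical
  obtain ⟨a, b⟩ := r
  obtain ⟨P, hP, rfl⟩ := exists_isIdempotentElem_rank_eq 𝕜 (n := ι) (Nat.le_of_add_right_le hr)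
  have hrange : Set.range (adaptedComplex hP b) = rankLocus 𝕜 p ι q (P.rank, b) :=
    Set.Subset.antisymm (Set.range_subset_iff.2 (adaptedComplex_mem_rankLocus hP))
      fun _ => exists_adaptedComplex_eq hP hr
  let := zariskiTopology 𝕜
    (Matrix ι ι 𝕜 × Matrix ι p 𝕜 × Matrix q (Fin b) 𝕜 × Matrix (Fin b) ι 𝕜)
  have := irreducibleSpace_zariskiTopology 𝕜
    (Matrix ι ι 𝕜 × Matrix ι p 𝕜 × Matrix q (Fin b) 𝕜 × Matrix (Fin b) ι 𝕜)
  rw [← hrange, ← Set.image_univ]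
  exact (IrreducibleSpace.isIrreducible_univ _).image _
    (continuous_adaptedComplex hP b).continuousOn

theorem irreducibleComponents_varietyOfComplexes [Infinite 𝕜] [Fintype p] [Fintype q] :
    irreducibleComponents (VarietyOfComplexes 𝕜 p ι q) = rankLocus 𝕜 p ι q ''
      {r | Maximal (· ∈ admissibleRanks (Fintype.card p) (Fintype.card ι) (Fintype.card q)) r} :=
  irreducibleComponents_eq_image_maximal (finite_admissibleRanks _ _ _)
    (fun r _ => isClosed_rankLocus r) (fun _ hr => isIrreducible_rankLocus hr.2.2)
    exists_mem_rankLocus fun _ hr _ _ => rankLocus_subset_rankLocus_iff hr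

theorem ncard_irreducibleComponents_varietyOfComplexes (𝕜 p ι q : Type*) [Field 𝕜] [Infinite 𝕜]
    [Fintype p] [Fintype ι] [Fintype q] :
    (irreducibleComponents (VarietyOfComplexes 𝕜 p ι q)).ncard =
      {r | Maximal (· ∈ admissibleRanks (Fintype.card p) (Fintype.card ι) (Fintype.card q))
        r}.ncard := by
  rw [irreducibleComponents_varietyOfComplexes]
  refine Set.InjOn.ncard_image fun r hr s hs hrs => le_antisymm ?_ ?_
  · exact (rankLocus_subset_rankLocus_iff hr.1).1 hrs.subset
  · exact (rankLocus_subset_rankLocus_iff hs.1).1 hrs.superset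

end VarietyOfComplexes

section Counting

theorem maximal_mem_admissibleRanks_iff {a n b : ℕ} (h : n ≤ a + b) {r : ℕ × ℕ} :
    Maximal (· ∈ admissibleRanks a n b) r ↔ r.1 + r.2 = n ∧ r.1 ≤ a ∧ r.2 ≤ b := by
  constructor
  · rintro ⟨⟨ha, hb, hn⟩, hmax⟩
    refine ⟨hn.antisymm (not_lt.1 fun hlt => ?_), ha, hb⟩
    obtain hra | hrb : r.1 < a ∨ r.2 < b := by lia
    · have hle := hmax (y := (r.1 + 1, r.2)) ⟨hra, hb, by lia⟩ ⟨Nat.le_succ _, le_rfl⟩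
      exact Nat.not_succ_le_self _ hle.1
    · have hle := hmax (y := (r.1, r.2 + 1)) ⟨ha, hrb, by lia⟩ ⟨le_rfl, Nat.le_succ _⟩
      exact Nat.not_succ_le_self _ hle.2
  · rintro ⟨hn, ha, hb⟩
    refine ⟨⟨ha, hb, hn.le⟩, fun s hs hrs => ?_⟩
    have hrs₁ := hrs.1
    have hrs₂ := hrs.2
    have hsn := hs.2.2
    exact ⟨by lia, by lia⟩

theorem ncard_setOf_add_eq {a n b : ℕ} (h : n ≤ a + b) :
    {r : ℕ × ℕ | r.1 + r.2 = n ∧ r.1 ≤ a ∧ r.2 ≤ b}.ncard = min a n - (n - b) + 1 := by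
  have himage : {r : ℕ × ℕ | r.1 + r.2 = n ∧ r.1 ≤ a ∧ r.2 ≤ b} =
      (fun i => (i, n - i)) '' (Finset.Icc (n - b) (min a n) : Set ℕ) := by
    ext ⟨i, j⟩
    simp only [Set.mem_ofPred_eq, Set.mem_image, Finset.mem_coe, Finset.mem_Icc, Prod.mk.injEq]
    constructor
    · intro hij
      exact ⟨i, by lia, rfl, by lia⟩
    · rintro ⟨k, hk, rfl, rfl⟩
      lia
  rw [himage, Set.InjOn.ncard_image fun i _ j _ hij => congrArg Prod.fst hij,
    Set.ncard_coe_finset, Nat.card_Icc]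
  lia

end Counting

section Grid

variable {𝕜 : Type} [Field 𝕜] {ν₁ ν₂ ν₃ ν₄ : ℕ}

theorem adjoin_gridCoords_eq_regularFunctions :
    Algebra.adjoin 𝕜 (gridCoords 𝕜 ν₁ ν₂ ν₃ ν₄) =
      regularFunctions 𝕜 (GridAmb 𝕜 ν₁ ν₂ ν₃ ν₄) := by
  refine le_antisymm (Algebra.adjoin_le ?_) (Algebra.adjoin_le ?_)
  · have hproj {m n : Type} (L : GridAmb 𝕜 ν₁ ν₂ ν₃ ν₄ →ₗ[𝕜] Matrix m n 𝕜) (i : m) (j : n) :=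
      hasEntriesIn_linearMap L i j
    rintro _ (⟨i, j, rfl⟩ | ⟨i, j, rfl⟩ | ⟨i, j, rfl⟩ | ⟨i, j, rfl⟩)
    · exact hproj (LinearMap.fst 𝕜 _ _) i j
    · exact hproj (LinearMap.fst 𝕜 _ _ ∘ₗ LinearMap.snd 𝕜 _ _) i j
    · exact hproj (LinearMap.fst 𝕜 _ _ ∘ₗ LinearMap.snd 𝕜 _ _ ∘ₗ LinearMap.snd 𝕜 _ _) i j
    · exact hproj (LinearMap.snd 𝕜 _ _ ∘ₗ LinearMap.snd 𝕜 _ _ ∘ₗ LinearMap.snd 𝕜 _ _) i j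
  · let S := Algebra.adjoin 𝕜 (gridCoords 𝕜 ν₁ ν₂ ν₃ ν₄)
    have h₁ : HasEntriesIn S fun x => x.1 := fun i j =>
      Algebra.subset_adjoin (.inl ⟨i, j, rfl⟩)
    have h₂ : HasEntriesIn S fun x => x.2.1 := fun i j =>
      Algebra.subset_adjoin (.inr (.inl ⟨i, j, rfl⟩))
    have h₃ : HasEntriesIn S fun x => x.2.2.1 := fun i j =>
      Algebra.subset_adjoin (.inr (.inr (.inl ⟨i, j, rfl⟩)))
    have h₄ : HasEntriesIn S fun x => x.2.2.2 := fun i j =>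
      Algebra.subset_adjoin (.inr (.inr (.inr ⟨i, j, rfl⟩)))
    rintro _ ⟨φ, rfl⟩
    exact dual_comp_prodMk_mem h₁.dual_comp_mem (dual_comp_prodMk_mem h₂.dual_comp_mem
      (dual_comp_prodMk_mem h₃.dual_comp_mem h₄.dual_comp_mem)) φ

theorem gridZariski_eq_zariskiTopology :
    gridZariski 𝕜 ν₁ ν₂ ν₃ ν₄ = zariskiTopology 𝕜 (GridAmb 𝕜 ν₁ ν₂ ν₃ ν₄) := by
  rw [gridZariski, adjoin_gridCoords_eq_regularFunctions]

variable (𝕜 ν₁ ν₂ ν₃ ν₄) in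
/-- The two maps through the middle vertices, stacked. The sign turns commutativity of a square
into vanishing of the composite. -/
def stackEquiv : GridAmb 𝕜 ν₁ ν₂ ν₃ ν₄ ≃ₗ[𝕜]
    Matrix (Fin ν₂ ⊕ Fin ν₃) (Fin ν₁) 𝕜 × Matrix (Fin ν₄) (Fin ν₂ ⊕ Fin ν₃) 𝕜 where
  toFun x := (Matrix.fromRows x.1 x.2.1, Matrix.fromCols x.2.2.1 (-x.2.2.2))
  invFun y := (y.1.toRows₁, y.1.toRows₂, y.2.toCols₁, -y.2.toCols₂)
  map_add' x y := by
    refine Prod.ext ?_ ?_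
    · ext (_ | _) _ <;> rfl
    · ext _ (_ | _) <;> simp [add_comm]
  map_smul' c x := by
    refine Prod.ext ?_ ?_
    · ext (_ | _) _ <;> rfl
    · ext _ (_ | _) <;> simp
  left_inv x := by simp
  right_inv y := by simp

theorem stackEquiv_snd_mul_fst_eq_zero_iff (x : GridAmb 𝕜 ν₁ ν₂ ν₃ ν₄) :
    (stackEquiv 𝕜 ν₁ ν₂ ν₃ ν₄ x).2 * (stackEquiv 𝕜 ν₁ ν₂ ν₃ ν₄ x).1 = 0 ↔
      x.2.2.1 * x.1 = x.2.2.2 * x.2.1 := by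
  simp [stackEquiv, Matrix.fromCols_mul_fromRows, add_neg_eq_zero]

variable (𝕜 ν₁ ν₂ ν₃ ν₄) in
theorem ncard_irreducibleComponents_grid :
    letI : TopologicalSpace (GridAmb 𝕜 ν₁ ν₂ ν₃ ν₄) := gridZariski 𝕜 ν₁ ν₂ ν₃ ν₄
    (irreducibleComponents
        {x : GridAmb 𝕜 ν₁ ν₂ ν₃ ν₄ // x.2.2.1 * x.1 = x.2.2.2 * x.2.1}).ncard =
      (irreducibleComponents
        (VarietyOfComplexes 𝕜 (Fin ν₁) (Fin ν₂ ⊕ Fin ν₃) (Fin ν₄))).ncard := by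
  rw [gridZariski_eq_zariskiTopology]
  let := zariskiTopology 𝕜 (GridAmb 𝕜 ν₁ ν₂ ν₃ ν₄)
  let := zariskiTopology 𝕜
    (Matrix (Fin ν₂ ⊕ Fin ν₃) (Fin ν₁) 𝕜 × Matrix (Fin ν₄) (Fin ν₂ ⊕ Fin ν₃) 𝕜)
  let e : GridAmb 𝕜 ν₁ ν₂ ν₃ ν₄ ≃ₜ
      Matrix (Fin ν₂ ⊕ Fin ν₃) (Fin ν₁) 𝕜 × Matrix (Fin ν₄) (Fin ν₂ ⊕ Fin ν₃) 𝕜 :=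
    { (stackEquiv 𝕜 ν₁ ν₂ ν₃ ν₄).toEquiv with
      continuous_toFun :=
        continuous_zariskiTopology_linearMap (stackEquiv 𝕜 ν₁ ν₂ ν₃ ν₄).toLinearMap
      continuous_invFun :=
        continuous_zariskiTopology_linearMap (stackEquiv 𝕜 ν₁ ν₂ ν₃ ν₄).symm.toLinearMap }
  exact ncard_irreducibleComponents_eq_of_homeomorph
    (e.subtype fun x => (stackEquiv_snd_mul_fst_eq_zero_iff x).symm)

end Grid

theorem stmt7_general (𝕜 : Type) [Field 𝕜] [Infinite 𝕜] (ν₁ ν₂ ν₃ ν₄ : ℕ)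
    (hν : ν₂ + ν₃ ≤ ν₁ + ν₄) :
    letI : TopologicalSpace (GridAmb 𝕜 ν₁ ν₂ ν₃ ν₄) := gridZariski 𝕜 ν₁ ν₂ ν₃ ν₄
    (irreducibleComponents
        {x : GridAmb 𝕜 ν₁ ν₂ ν₃ ν₄ // x.2.2.1 * x.1 = x.2.2.2 * x.2.1}).ncard =
        Set.ncard {p : ℕ × ℕ | p.1 + p.2 = ν₂ + ν₃ ∧ p.1 ≤ ν₁ ∧ p.2 ≤ ν₄} ∧
      (irreducibleComponents
        {x : GridAmb 𝕜 ν₁ ν₂ ν₃ ν₄ // x.2.2.1 * x.1 = x.2.2.2 * x.2.1}).ncard =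
        min ν₁ (ν₂ + ν₃) - (ν₂ + ν₃ - ν₄) + 1 := by
  rw [ncard_irreducibleComponents_grid, ncard_irreducibleComponents_varietyOfComplexes]
  simp only [Fintype.card_sum, Fintype.card_fin, maximal_mem_admissibleRanks_iff hν,
    true_and]
  exact ncard_setOf_add_eq hν

/-- When `ν₁ + ν₄ ≥ ν₂ + ν₃`, the number of irreducible components of the representation
variety `E_C(ν)` of the commutative `2 × 2` grid equals the number of pairs `(r₁,r₂)` with
`r₁ + r₂ = ν₂ + ν₃`, `r₁ ≤ ν₁`, `r₂ ≤ ν₄`; that is,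
`min ν₁ (ν₂+ν₃) - max 0 (ν₂+ν₃-ν₄) + 1`. -/
theorem stmt7 (𝕜 : Type) [Field 𝕜] [IsAlgClosed 𝕜] (ν₁ ν₂ ν₃ ν₄ : ℕ)
    (hν : ν₂ + ν₃ ≤ ν₁ + ν₄) :
    letI : TopologicalSpace (GridAmb 𝕜 ν₁ ν₂ ν₃ ν₄) := gridZariski 𝕜 ν₁ ν₂ ν₃ ν₄
    (irreducibleComponents
        {x : GridAmb 𝕜 ν₁ ν₂ ν₃ ν₄ // x.2.2.1 * x.1 = x.2.2.2 * x.2.1}).ncard =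
        Set.ncard {p : ℕ × ℕ | p.1 + p.2 = ν₂ + ν₃ ∧ p.1 ≤ ν₁ ∧ p.2 ≤ ν₄} ∧
      (irreducibleComponents
        {x : GridAmb 𝕜 ν₁ ν₂ ν₃ ν₄ // x.2.2.1 * x.1 = x.2.2.2 * x.2.1}).ncard =
        min ν₁ (ν₂ + ν₃) - (ν₂ + ν₃ - ν₄) + 1 := by
  have : Infinite 𝕜 := IsAlgClosed.instInfinite
  exact stmt7_general 𝕜 ν₁ ν₂ ν₃ ν₄ hν
end
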